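/- Let G be a finite simple graph with δ(G) ≥ 2·α̃(G) − 2. Then for every set S of vertices with |S| < α(G) and every two distinct vertices u, v ∉ S, there is a path in G from u to v avoiding all vertices of S. (Equivalently, κ(G) ≥ α(G), so the hypothesis of the Chvátal–Erdős theorem is satisfied.) -/

import Mathlib

def SimpleGraph.HasBipartiteHole {V : Type*} (G : SimpleGraph V) (s t : ℕ) : Prop :=
  ∃ S T : Finset V, Disjoint S T ∧ S.card = s ∧ T.card = t ∧
    ∀ a ∈ S, ∀ b ∈ T, ¬ G.Adj a b

noncomputable def SimpleGraph.biHoleNumber {V : Type*} (G : SimpleGraph V) : ℕ :=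
  sInf {r : ℕ | ∃ s t : ℕ, 0 < s ∧ 0 < t ∧ r = s + t - 1 ∧ ¬ G.HasBipartiteHole s t}

/-- The independence number `α(G)`: the largest size of a set of pairwise non-adjacent
vertices. -/
noncomputable def SimpleGraph.indepNumber {V : Type*} (G : SimpleGraph V) : ℕ :=
  sSup {n : ℕ | ∃ s : Finset V, s.card = n ∧ ∀ a ∈ s, ∀ b ∈ s, a ≠ b → ¬ G.Adj a b}

/-!
Take `s, t > 0` with `α̃(G) = s + t - 1` and no `(s, t)`-bipartite-hole. An independent set of size
`s + t` would split into such a hole, so `α(G) ≤ α̃(G)` and `|S| < α̃(G)`. After deleting `S`, each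
remaining vertex and its remaining neighbours number at least `δ(G) + 1 - |S| ≥ α̃(G) ≥ max s t`.
Two different components of `G - S` would therefore contain an `(s, t)`-bipartite-hole.
-/

section

open SimpleGraph

variable {V : Type*} {G : SimpleGraph V} {s t : ℕ}

theorem hasBipartiteHole_of_le_encard {A B : Set V} (hAB : Disjoint A B) (hs : s ≤ A.encard)
    (ht : t ≤ B.encard) (hadj : ∀ a ∈ A, ∀ b ∈ B, ¬ G.Adj a b) : G.HasBipartiteHole s t := by
  obtain ⟨A', hA', hs⟩ := Set.exists_subset_encard_eq hs
  obtain ⟨B', hB', ht⟩ := Set.exists_subset_encard_eq ht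
  lift A' to Finset V using Set.finite_of_encard_eq_coe hs
  lift B' to Finset V using Set.finite_of_encard_eq_coe ht
  rw [Set.encard_coe_eq_coe_finsetCard, Nat.cast_inj] at hs ht
  exact ⟨A', B', Finset.disjoint_coe.mp (hAB.mono hA' hB'), hs, ht,
    fun a ha b hb => hadj a (hA' ha) b (hB' hb)⟩

theorem hasBipartiteHole_of_embedding {W : Type*} {H : SimpleGraph W} (f : H ↪g G)
    (hole : H.HasBipartiteHole s t) : G.HasBipartiteHole s t := by
  obtain ⟨A, B, hAB, hA, hB, hadj⟩ := hole
  refine ⟨A.map f.toEmbedding, B.map f.toEmbedding, (Finset.disjoint_map _).mpr hAB,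
    by rw [Finset.card_map, hA], by rw [Finset.card_map, hB], ?_⟩
  simpa only [Finset.forall_mem_map, RelEmbedding.coe_toEmbedding, f.map_adj_iff] using hadj

theorem hasBipartiteHole_of_isIndepSet {I : Finset V} (hI : G.IsIndepSet I)
    (hcard : s + t ≤ I.card) : G.HasBipartiteHole s t := by
  classical
  obtain ⟨A, hAI, rfl⟩ := Finset.exists_subset_card_eq (le_of_add_le_left hcard)
  obtain ⟨B, hBI, rfl⟩ := Finset.exists_subset_card_eq
    (show t ≤ (I \ A).card by rw [Finset.card_sdiff_of_subset hAI]; omega)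
  have hAB : Disjoint A B := Finset.disjoint_sdiff.mono_right hBI
  exact ⟨A, B, hAB, rfl, rfl, fun a ha b hb => hI (hAI ha) (Finset.sdiff_subset (hBI hb))
    (Finset.disjoint_iff_ne.mp hAB a ha b hb)⟩

theorem indepNumber_lt_of_not_hasBipartiteHole (hole : ¬ G.HasBipartiteHole s t) :
    G.indepNumber < s + t := by
  have card_lt (I : Finset V) (hI : G.IsIndepSet I) : I.card < s + t := by
    by_contra! hcard
    exact hole (hasBipartiteHole_of_isIndepSet hI hcard)
  have pos : 0 < s + t := card_lt ∅ (by simp)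
  refine (csSup_le' ?_ : G.indepNumber ≤ s + t - 1).trans_lt (by omega)
  rintro _ ⟨I, rfl, hI⟩
  exact Nat.le_sub_one_of_lt (card_lt I fun a ha b hb => hI a ha b hb)

theorem exists_biHoleNumber_eq_and_not_hasBipartiteHole
    (hG : ∃ s t : ℕ, 0 < s ∧ 0 < t ∧ ¬ G.HasBipartiteHole s t) :
    ∃ s t : ℕ, 0 < s ∧ 0 < t ∧ G.biHoleNumber = s + t - 1 ∧ ¬ G.HasBipartiteHole s t := by
  obtain ⟨s, t, hs, ht, hole⟩ := hG
  exact Nat.sInf_mem (s := {r : ℕ | ∃ s t : ℕ, 0 < s ∧ 0 < t ∧ r = s + t - 1 ∧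
    ¬ G.HasBipartiteHole s t}) ⟨_, s, t, hs, ht, rfl, hole⟩

theorem exists_not_hasBipartiteHole [Finite V] :
    ∃ s t : ℕ, 0 < s ∧ 0 < t ∧ ¬ G.HasBipartiteHole s t := by
  have := Fintype.ofFinite V
  refine ⟨Fintype.card V + 1, 1, Nat.succ_pos _, one_pos, ?_⟩
  rintro ⟨A, -, -, hA, -⟩
  exact A.card_le_univ.not_gt (hA ▸ Nat.lt_succ_self _)

theorem connectedComponent_eq_of_not_hasBipartiteHole (hole : ¬ G.HasBipartiteHole s t)
    {C D : G.ConnectedComponent} (hs : s ≤ C.supp.encard) (ht : t ≤ D.supp.encard) : C = D := by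
  by_contra hne
  have hCD : Disjoint C.supp D.supp := G.pairwise_disjoint_supp_connectedComponent hne
  refine hole (hasBipartiteHole_of_le_encard hCD hs ht fun a ha b hb hab => ?_)
  exact Set.disjoint_left.mp hCD (C.mem_supp_of_adj_mem_supp ha hab) hb

theorem encard_neighborSet_add_one_le_encard_supp (v : V) :
    (G.neighborSet v).encard + 1 ≤ (G.connectedComponentMk v).supp.encard := by
  rw [← Set.encard_insert_of_notMem G.notMem_neighborSet_self]
  refine Set.encard_le_encard (Set.insert_subset rfl fun w hw => ?_)
  exact ConnectedComponent.mem_supp_of_adj_mem_supp _ rfl hw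

theorem reachable_of_not_hasBipartiteHole (hole : ¬ G.HasBipartiteHole s t) {u v : V}
    (hs : s ≤ (G.neighborSet u).encard + 1) (ht : t ≤ (G.neighborSet v).encard + 1) :
    G.Reachable u v :=
  ConnectedComponent.exact <| connectedComponent_eq_of_not_hasBipartiteHole hole
    (hs.trans (encard_neighborSet_add_one_le_encard_supp u))
    (ht.trans (encard_neighborSet_add_one_le_encard_supp v))

theorem encard_neighborSet_le_induce_compl_add (S : Set V) (v : ↥Sᶜ) :
    (G.neighborSet v).encard ≤ ((G.induce Sᶜ).neighborSet v).encard + S.encard := by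
  rw [neighborSet_induce, ← Subtype.val_injective.encard_image, Subtype.image_preimage_coe,
    Set.inter_comm, ← Set.sdiff_eq, Set.encard_sdiff_add_encard]
  exact Set.encard_le_encard Set.subset_union_left

theorem reachable_induce_compl_of_not_hasBipartiteHole (hole : ¬ G.HasBipartiteHole s t)
    {S : Set V} (hS : S.Finite) {u v : ↥Sᶜ} (hs : s + S.encard ≤ (G.neighborSet u).encard + 1)
    (ht : t + S.encard ≤ (G.neighborSet v).encard + 1) : (G.induce Sᶜ).Reachable u v := by
  have le_of_add_le {k : ℕ} {w : ↥Sᶜ} (hk : k + S.encard ≤ (G.neighborSet w).encard + 1) :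
      k ≤ ((G.induce Sᶜ).neighborSet w).encard + 1 := by
    grw [encard_neighborSet_le_induce_compl_add, add_right_comm] at hk
    exact (ENat.add_le_add_iff_right hS.encard_lt_top.ne).mp hk
  exact reachable_of_not_hasBipartiteHole
    (fun hole' => hole (hasBipartiteHole_of_embedding (Embedding.induce Sᶜ) hole'))
    (le_of_add_le hs) (le_of_add_le ht)

theorem exists_isPath_of_reachable_induce {A : Set V} {u v : A}
    (huv : (G.induce A).Reachable u v) :
    ∃ p : G.Walk u v, p.IsPath ∧ ∀ w ∈ p.support, w ∈ A := by
  obtain ⟨p, hp⟩ := huv.exists_isPath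
  refine ⟨p.map (Embedding.induce A).toHom, hp.map Subtype.val_injective, fun w hw => ?_⟩
  obtain ⟨a, -, rfl⟩ := List.mem_map.mp (p.support_map _ ▸ hw)
  exact a.2

theorem connectivity_ge_indepNumber_of_minDegree_ge_general
    (hG : ∃ s t : ℕ, 0 < s ∧ 0 < t ∧ ¬ G.HasBipartiteHole s t) {u v : V}
    (hdu : 2 * (G.biHoleNumber : ℕ∞) ≤ (G.neighborSet u).encard + 2)
    (hdv : 2 * (G.biHoleNumber : ℕ∞) ≤ (G.neighborSet v).encard + 2)
    {S : Finset V} (hS : S.card < G.indepNumber) (hu : u ∉ S) (hv : v ∉ S) :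
    ∃ p : G.Walk u v, p.IsPath ∧ ∀ w ∈ p.support, w ∉ S := by
  obtain ⟨s, t, hs, ht, hr, hole⟩ := exists_biHoleNumber_eq_and_not_hasBipartiteHole hG
  have hα : G.indepNumber < s + t := indepNumber_lt_of_not_hasBipartiteHole hole
  have add_encard_le {k : ℕ} {w : V} (hk : k ≤ G.biHoleNumber)
      (hdw : 2 * (G.biHoleNumber : ℕ∞) ≤ (G.neighborSet w).encard + 2) :
      k + (S : Set V).encard ≤ (G.neighborSet w).encard + 1 := by
    refine (ENat.add_le_add_iff_right ENat.one_ne_top).mp ?_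
    calc (k : ℕ∞) + (S : Set V).encard + 1 ≤ 2 * G.biHoleNumber := by
          rw [Set.encard_coe_eq_coe_finsetCard]
          norm_cast
          omega
      _ ≤ (G.neighborSet w).encard + 1 + 1 := by rwa [add_assoc, one_add_one_eq_two]
  have huv : (G.induce (S : Set V)ᶜ).Reachable ⟨u, hu⟩ ⟨v, hv⟩ :=
    reachable_induce_compl_of_not_hasBipartiteHole hole S.finite_toSet
      (add_encard_le (by omega) hdu) (add_encard_le (by omega) hdv)
  exact exists_isPath_of_reachable_induce huv

theorem two_mul_biHoleNumber_le_encard_neighborSet_add_two [Fintype V] [DecidableRel G.Adj]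
    (h : 2 * G.biHoleNumber ≤ G.minDegree + 2) (v : V) :
    2 * (G.biHoleNumber : ℕ∞) ≤ (G.neighborSet v).encard + 2 := by
  rw [← G.coe_neighborFinset, Set.encard_coe_eq_coe_finsetCard, G.card_neighborFinset_eq_degree]
  exact_mod_cast h.trans (Nat.add_le_add_right (G.minDegree_le_degree v) 2)

end

theorem connectivity_ge_indepNumber_of_minDegree_ge
    {V : Type*} [Fintype V] [DecidableEq V] (G : SimpleGraph V) [DecidableRel G.Adj]
    (h : 2 * G.biHoleNumber ≤ G.minDegree + 2)
    (S : Finset V) (hS : S.card < G.indepNumber)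
    (u v : V) (huv : u ≠ v) (hu : u ∉ S) (hv : v ∉ S) :
    ∃ p : G.Walk u v, p.IsPath ∧ ∀ w ∈ p.support, w ∉ S := by
  have hdeg := two_mul_biHoleNumber_le_encard_neighborSet_add_two h
  exact connectivity_ge_indepNumber_of_minDegree_ge_general
    exists_not_hasBipartiteHole (hdeg u) (hdeg v) hS hu hv
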